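/- Let Φ be a collection of clauses C_1, …, C_m, each containing three literals, and let G(Φ) be the graph constructed from Φ as described. Then G(Φ) has a two-coloured perfect matching if and only if the literals can be assigned values true or false so that every clause of Φ contains at least one true literal and at least one false literal. -/

import Mathlib

/-- A two-coloured perfect matching of `G`: a two-colouring (black/white, modelled by
`Bool`) of the vertices in which every vertex has exactly one neighbour of the same
colour. -/
def IsTCPM {V : Type*} (G : SimpleGraph V) (c : V → Bool) : Prop :=
  ∀ v, ∃! w, G.Adj v w ∧ c w = c v

/-- The vertices of one copy of `H` that survive in the graph `G(Φ)`: the vertices of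
`H` other than `a`, `m`, `n` (deleted/identified when forming the clause gadget `K`)
and other than the degree-one vertices `q`, `r` (deleted when joining clause gadgets). -/
inductive GHV | b | c | d | e | f | g | h | i | j | k | l | o | p
deriving DecidableEq

/-- The vertices of the graph `G(Φ)` for an instance with `m` clauses: for each clause
`i` a vertex `a i` (the identified vertex of the clause gadget `K(Cᵢ)`) and a copy
`v i t x` of each surviving vertex `x` of `H`, for each of the three subgraphs
`H_t` of `K(Cᵢ)`. -/
inductive GV (m : ℕ)
| a (i : Fin m)
| v (i : Fin m) (t : Fin 3) (x : GHV)

open GHV in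
/-- The edges of `H` not incident to any of `a`, `m`, `n`, `q`, `r`. -/
def GCopyEdges : List (GHV × GHV) :=
  [(b,c),(b,d),(c,e),(c,f),(e,f),(d,g),(d,h),(g,h),(e,i),(f,j),(g,k),
   (h,l),(j,k),(i,o),(j,o),(k,p),(l,p)]

/-- The adjacency generating relation of the graph `G(Φ)`, where the cyclic order of
the occurrences of each literal is recorded by the successor function `next` on
occurrences (pairs (clause, position)):
* the edges `a bₜ` and the copies of the edges of `H` inside each clause gadget;
* the edges `l₁i₂`, `l₂i₃`, `l₃i₁` inside each clause gadget;
* for each occurrence `s`, an identifying edge joining the vertex `p` of the occurrence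
  `s` (the former neighbour of the deleted degree-one vertex `r` of `s`) to the vertex
  `o` of the occurrence `next s` (the former neighbour of the deleted degree-one vertex
  `q` of `next s`). -/
def GPhiAdj (m : ℕ) (next : Fin m × Fin 3 → Fin m × Fin 3) :
    GV m → GV m → Prop := fun x y =>
  (∃ i t, x = GV.a i ∧ y = GV.v i t GHV.b) ∨
  (∃ i t x' y', x = GV.v i t x' ∧ y = GV.v i t y' ∧ (x', y') ∈ GCopyEdges) ∨
  (∃ i t, x = GV.v i t GHV.l ∧ y = GV.v i (t + 1) GHV.i) ∨
  (∃ s : Fin m × Fin 3,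
    x = GV.v s.1 s.2 GHV.p ∧ y = GV.v (next s).1 (next s).2 GHV.o)

/-- The graph `G(Φ)` constructed from an instance of Not-All-Equal 3SAT. -/
def GPhi (m : ℕ) (next : Fin m × Fin 3 → Fin m × Fin 3) : SimpleGraph (GV m) :=
  SimpleGraph.fromRel (GPhiAdj m next)

/-!
In a two-coloured perfect matching, two vertices of a triangle of cubic vertices are matched to each
other and the third is matched to its neighbour outside, so the three outside neighbours share a
colour. The triangles `cef` and `dgh` of a copy of `H` thus give `j`, `k` and `l` the colour of `b`;
then `j` and `k` are matched, `o` and `p` have the opposite colour, and `p` can only be matched to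
the vertex `o` of the next occurrence of its literal. Hence the colour of `o` is a truth value of
the literal, and it is the opposite of the colour of `b`. The vertex `a` has exactly one neighbour
of its own colour among the three vertices `b`, so the three truth values are not all equal.
Conversely, such truth values determine an explicit colouring.
-/

lemma comp_eq_self_iff_exists_eq_comp {S X Y : Type*} [Nonempty Y] {f : S → S} {l : S → X}
    (hl : l ∘ f = l) (horbit : ∀ s t, l s = l t → ∃ n, f^[n] s = t) (τ : S → Y) :
    τ ∘ f = τ ↔ ∃ σ : X → Y, τ = σ ∘ l := by
  rw [← Function.factorsThrough_iff]
  constructor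
  · intro hτ s t hst
    obtain ⟨n, rfl⟩ := horbit s t hst
    exact (congrFun (Function.iterate_invariant hτ n) s).symm
  · intro hτ
    exact funext fun s => hτ (congrFun hl s)

/-- Some value of `f` is `true` and some value is `false`: the condition on the truth values of the
literals of a clause. -/
def NotAllEqual {ι : Type*} (f : ι → Bool) : Prop :=
  (∃ t, f t = true) ∧ ∃ t, f t = false

lemma notAllEqual_of_ne {ι : Type*} {f : ι → Bool} {s t : ι} (h : f s ≠ f t) : NotAllEqual f := by
  cases hs : f s <;> rw [hs] at h
  · exact ⟨⟨t, Bool.eq_true_of_not_eq_false h.symm⟩, s, hs⟩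
  · exact ⟨⟨s, hs⟩, t, Bool.eq_false_of_not_eq_true h.symm⟩

section NeighborList

variable {V α : Type*} {G : SimpleGraph V} {v : V} {us : List V}

/-- `us` lists the neighbours of the vertex `v` of `G`, each of them once. -/
def IsNeighborList (G : SimpleGraph V) (v : V) (us : List V) : Prop :=
  us.Nodup ∧ ∀ w, G.Adj v w ↔ w ∈ us

lemma IsNeighborList.existsUnique_adj_iff_count_eq_one [DecidableEq α]
    (h : IsNeighborList G v us) (c : V → α) (k : α) :
    (∃! w, G.Adj v w ∧ c w = k) ↔ (us.map c).count k = 1 := by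
  classical
  have hcount : (us.map c).count k = (us.toFinset.filter (c · = k)).card := by
    rw [List.count, List.countP_map, List.countP_eq_length_filter,
      ← List.toFinset_card_of_nodup (h.1.filter _), List.toFinset_filter]
    simp
  rw [hcount, Finset.card_eq_one_iff_existsUnique]
  simp only [Finset.mem_filter, List.mem_toFinset, h.2]

end NeighborList

namespace IsTCPM

variable {V : Type*} {G : SimpleGraph V} {c : V → Bool} {v u w : V}

lemma count_neighborList_eq_one {us : List V} (hc : IsTCPM G c) (h : IsNeighborList G v us) :
    (us.map c).count (c v) = 1 :=
  (h.existsUnique_adj_iff_count_eq_one c (c v)).1 (hc v)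

lemma color_ne_of_adj (hc : IsTCPM G c) (hw : G.Adj v w) (hwv : c w = c v) (hu : G.Adj v u)
    (huw : u ≠ w) : c u ≠ c v :=
  fun huv => huw ((hc v).unique ⟨hu, huv⟩ ⟨hw, hwv⟩)

lemma exists_adj_color_ne (hc : IsTCPM G c) (hu : G.Adj v u) (hw : G.Adj v w) (huw : u ≠ w) :
    ∃ x, G.Adj v x ∧ c x ≠ c v := by
  by_cases hwv : c w = c v
  · exact ⟨u, hu, hc.color_ne_of_adj hw hwv hu huw⟩
  · exact ⟨w, hw, hwv⟩

lemma color_eq_of_triangle {x y z x' y' z' : V} (hc : IsTCPM G c)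
    (hx : IsNeighborList G x [x', y, z]) (hy : IsNeighborList G y [y', x, z])
    (hz : IsNeighborList G z [z', x, y]) : c y' = c x' ∧ c z' = c x' := by
  have hcx := hc.count_neighborList_eq_one hx
  have hcy := hc.count_neighborList_eq_one hy
  have hcz := hc.count_neighborList_eq_one hz
  simp only [List.map_cons, List.map_nil] at hcx hcy hcz
  generalize c x = a, c y = b, c z = d, c x' = a', c y' = b', c z' = d' at *
  revert a b d a' b' d'
  decide

end IsTCPM

namespace GV

variable {m : ℕ} (E : Equiv.Perm (Fin m × Fin 3))

lemma gphi_adj_iff (next : Fin m × Fin 3 → Fin m × Fin 3) (x y : GV m) :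
    (GPhi m next).Adj x y ↔ GPhiAdj m next x y ∨ GPhiAdj m next y x := by
  have hirrefl : ¬GPhiAdj m next x x := by
    rcases x with i | ⟨i, t, x⟩
    · simp [GPhiAdj]
    · cases x <;> simp [GPhiAdj, GCopyEdges]
  rw [GPhi, SimpleGraph.fromRel_adj, and_iff_right_iff_imp]
  rintro h rfl
  exact hirrefl (or_self_iff.1 h)

/-- The neighbours of a vertex in `G(Φ)`, where `E` is the cyclic successor of occurrences. For the
vertices of the triangles `cef` and `dgh` the neighbour outside the triangle comes first. -/
def neighbors : GV m → List (GV m)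
  | a i => [v i 0 .b, v i 1 .b, v i 2 .b]
  | v i t .b => [a i, v i t .c, v i t .d]
  | v i t .c => [v i t .b, v i t .e, v i t .f]
  | v i t .e => [v i t .i, v i t .c, v i t .f]
  | v i t .f => [v i t .j, v i t .c, v i t .e]
  | v i t .d => [v i t .b, v i t .g, v i t .h]
  | v i t .g => [v i t .k, v i t .d, v i t .h]
  | v i t .h => [v i t .l, v i t .d, v i t .g]
  | v i t .i => [v i t .e, v i t .o, v i (t - 1) .l]
  | v i t .j => [v i t .f, v i t .k, v i t .o]
  | v i t .k => [v i t .g, v i t .j, v i t .p]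
  | v i t .l => [v i t .h, v i t .p, v i (t + 1) .i]
  | v i t .o => [v i t .i, v i t .j, v (E.symm (i, t)).1 (E.symm (i, t)).2 .p]
  | v i t .p => [v i t .k, v i t .l, v (E (i, t)).1 (E (i, t)).2 .o]

lemma nodup_neighbors (x : GV m) : (neighbors E x).Nodup := by
  rcases x with i | ⟨i, t, x⟩
  · simp [neighbors]
  · cases x <;> simp [neighbors]

lemma gphi_adj_iff_mem_neighbors (x y : GV m) : (GPhi m E).Adj x y ↔ y ∈ neighbors E x := by
  have hsub (t s : Fin 3) : t = s + 1 ↔ s = t - 1 := by rw [eq_sub_iff_add_eq, eq_comm]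
  have hsymm (i t s) : i = (E s).1 ∧ t = (E s).2 ↔ s = E.symm (i, t) := by
    rw [Equiv.eq_symm_apply, Prod.ext_iff, eq_comm, @eq_comm _ t]
  rw [gphi_adj_iff]
  rcases x with i | ⟨i, t, x⟩
  · simp [GPhiAdj, neighbors, Fin.exists_fin_succ]
  · cases x <;>
      simp [GPhiAdj, GCopyEdges, neighbors, and_or_left, exists_or, hsub, hsymm] <;>
      tauto

lemma isNeighborList_neighbors (x : GV m) : IsNeighborList (GPhi m E) x (neighbors E x) :=
  ⟨nodup_neighbors E x, gphi_adj_iff_mem_neighbors E x⟩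

lemma isTCPM_gphi_iff (c : GV m → Bool) :
    IsTCPM (GPhi m E) c ↔ ∀ x, ((neighbors E x).map c).count (c x) = 1 :=
  forall_congr' fun x =>
    (isNeighborList_neighbors E x).existsUnique_adj_iff_count_eq_one c (c x)

end GV

namespace IsTCPM

variable {m : ℕ} {E : Equiv.Perm (Fin m × Fin 3)} {c : GV m → Bool}
  (hc : IsTCPM (GPhi m E) c) (i : Fin m) (t : Fin 3)

include hc

lemma color_j_eq_color_b : c (.v i t .j) = c (.v i t .b) :=
  (hc.color_eq_of_triangle (GV.isNeighborList_neighbors E (.v i t .c))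
    (GV.isNeighborList_neighbors E (.v i t .e)) (GV.isNeighborList_neighbors E (.v i t .f))).2

lemma color_k_eq_color_b : c (.v i t .k) = c (.v i t .b) :=
  (hc.color_eq_of_triangle (GV.isNeighborList_neighbors E (.v i t .d))
    (GV.isNeighborList_neighbors E (.v i t .g)) (GV.isNeighborList_neighbors E (.v i t .h))).1

lemma color_l_eq_color_b : c (.v i t .l) = c (.v i t .b) :=
  (hc.color_eq_of_triangle (GV.isNeighborList_neighbors E (.v i t .d))
    (GV.isNeighborList_neighbors E (.v i t .g)) (GV.isNeighborList_neighbors E (.v i t .h))).2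

lemma color_o_eq_not_color_b : c (.v i t .o) = !c (.v i t .b) := by
  have hjk : c (.v i t .k) = c (.v i t .j) := by rw [hc.color_j_eq_color_b, hc.color_k_eq_color_b]
  rw [Bool.eq_not, ← hc.color_j_eq_color_b]
  apply hc.color_ne_of_adj _ hjk <;> simp [GV.gphi_adj_iff_mem_neighbors, GV.neighbors]

lemma color_p_eq_not_color_b : c (.v i t .p) = !c (.v i t .b) := by
  have hkj : c (.v i t .j) = c (.v i t .k) := by rw [hc.color_j_eq_color_b, hc.color_k_eq_color_b]
  rw [Bool.eq_not, ← hc.color_k_eq_color_b]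
  apply hc.color_ne_of_adj _ hkj <;> simp [GV.gphi_adj_iff_mem_neighbors, GV.neighbors]

lemma color_o_next_eq_color_o : c (.v (E (i, t)).1 (E (i, t)).2 .o) = c (.v i t .o) := by
  obtain ⟨w, ⟨hadj, hw⟩, -⟩ := hc (.v i t .p)
  rw [hc.color_p_eq_not_color_b] at hw
  simp only [GV.gphi_adj_iff_mem_neighbors, GV.neighbors, List.mem_cons, List.not_mem_nil,
    or_false] at hadj
  rcases hadj with rfl | rfl | rfl
  · simp [hc.color_k_eq_color_b] at hw
  · simp [hc.color_l_eq_color_b] at hw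
  · rw [hw, hc.color_o_eq_not_color_b]

lemma notAllEqual_color_o : NotAllEqual fun t => c (.v i t .o) := by
  have hadj (w) : (GPhi m E).Adj (.a i) w ↔ ∃ t, w = .v i t .b := by
    simp [GV.gphi_adj_iff, GPhiAdj]
  obtain ⟨_, ⟨hs, hsa⟩, -⟩ := hc (.a i)
  obtain ⟨_, ht, hta⟩ :=
    hc.exists_adj_color_ne ((hadj _).2 ⟨0, rfl⟩) ((hadj _).2 ⟨1, rfl⟩) (by simp)
  obtain ⟨s, rfl⟩ := (hadj _).1 hs
  obtain ⟨t, rfl⟩ := (hadj _).1 ht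
  refine notAllEqual_of_ne (s := s) (t := t) ?_
  rw [hc.color_o_eq_not_color_b, hc.color_o_eq_not_color_b, hsa, Ne, Bool.not_inj_iff]
  exact hta.symm

end IsTCPM

namespace GV

variable {m : ℕ} {τ : Fin m × Fin 3 → Bool}

/-- The colouring of `G(Φ)` determined by the truth values `τ` of the occurrences of literals:
`a` takes the majority value of its clause and `b` the negated value of its occurrence. The edges
`l i` between consecutive copies of `H` make the pairs `c`, `e` and `d`, `h` depend on the value of
the preceding and of the following occurrence in the clause. -/
def coloring (τ : Fin m × Fin 3 → Bool) : GV m → Bool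
  | a i => Bool.atLeastTwo (τ (i, 0)) (τ (i, 1)) (τ (i, 2))
  | v i t .c => !τ (i, t - 1)
  | v i t .e => τ (i, t - 1)
  | v i t .d => !τ (i, t + 1)
  | v i t .h => τ (i, t + 1)
  | v i t .f | v i t .g | v i t .o | v i t .p => τ (i, t)
  | v i t .b | v i t .i | v i t .j | v i t .k | v i t .l => !τ (i, t)

lemma count_atLeastTwo_of_notAllEqual {f : Fin 3 → Bool} (hf : NotAllEqual f) :
    [!f 0, !f 1, !f 2].count (Bool.atLeastTwo (f 0) (f 1) (f 2)) = 1 := by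
  revert f
  unfold NotAllEqual
  decide

-- If `f t` is the minority value, the entry equal to `!f t` is the first one; otherwise it is the
-- one of the other two that comes from the majority value.
lemma count_not_of_notAllEqual {f : Fin 3 → Bool} (hf : NotAllEqual f) (t : Fin 3) :
    [Bool.atLeastTwo (f 0) (f 1) (f 2), !f (t - 1), !f (t + 1)].count (!f t) = 1 := by
  revert f t
  unfold NotAllEqual
  decide

lemma isTCPM_coloring (E : Equiv.Perm (Fin m × Fin 3)) (hE : ∀ s, τ (E s) = τ s)
    (hτ : ∀ i, NotAllEqual fun t => τ (i, t)) : IsTCPM (GPhi m E) (coloring τ) := by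
  have hE' s : τ (E.symm s) = τ s := by rw [← hE, E.apply_symm_apply]
  rw [isTCPM_gphi_iff]
  rintro (i | ⟨i, t, x⟩)
  · exact count_atLeastTwo_of_notAllEqual (hτ i)
  · cases x
    case b => exact count_not_of_notAllEqual (hτ i) t
    all_goals
      simp only [neighbors, coloring, List.map_cons, List.map_nil, Prod.mk.eta, hE, hE']
      cases τ (i, t) <;> cases τ (i, t + 1) <;> cases τ (i, t - 1) <;> rfl

end GV

theorem exists_isTCPM_gphi_iff {m : ℕ} (E : Equiv.Perm (Fin m × Fin 3)) :
    (∃ c, IsTCPM (GPhi m E) c) ↔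
      ∃ τ : Fin m × Fin 3 → Bool, τ ∘ E = τ ∧ ∀ i, NotAllEqual fun t => τ (i, t) := by
  constructor
  · rintro ⟨c, hc⟩
    exact ⟨fun s => c (.v s.1 s.2 .o), funext fun s => hc.color_o_next_eq_color_o s.1 s.2,
      hc.notAllEqual_color_o⟩
  · rintro ⟨τ, hE, hτ⟩
    exact ⟨GV.coloring τ, GV.isTCPM_coloring E (congrFun hE) hτ⟩

/-- Let `Φ` be a collection of `m` clauses, each with three literals (literals taken
from a type `X`), given by `Φ : Fin m → Fin 3 → X`, and let `next` be the cyclic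
successor of the occurrences of each literal (a literal-preserving bijection of the
occurrences whose orbits are exactly the occurrence classes of the literals).  Then
the graph `G(Φ)` has a two-coloured perfect matching if and only if the literals can
be assigned values true or false so that every clause contains at least one true
literal and at least one false literal. -/
theorem stmt_5 {X : Type*} (m : ℕ) (Φ : Fin m → Fin 3 → X)
    (next : Fin m × Fin 3 → Fin m × Fin 3)
    (hlit : ∀ s, Φ (next s).1 (next s).2 = Φ s.1 s.2)
    (hbij : Function.Bijective next)
    (hcyc : ∀ s t : Fin m × Fin 3, Φ s.1 s.2 = Φ t.1 t.2 → ∃ n : ℕ, next^[n] s = t) :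
    (∃ c : GV m → Bool, IsTCPM (GPhi m next) c) ↔
    (∃ σ : X → Bool, ∀ i : Fin m,
      (∃ t, σ (Φ i t) = true) ∧ (∃ t, σ (Φ i t) = false)) := by
  obtain ⟨E, rfl⟩ : ∃ E : Equiv.Perm (Fin m × Fin 3), next = E :=
    ⟨Equiv.ofBijective next hbij, rfl⟩
  have hfactor (τ : Fin m × Fin 3 → Bool) :
      τ ∘ E = τ ↔ ∃ σ : X → Bool, τ = fun s => σ (Φ s.1 s.2) :=
    comp_eq_self_iff_exists_eq_comp (funext hlit) hcyc τ
  rw [exists_isTCPM_gphi_iff]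
  constructor
  · rintro ⟨τ, hτ, hnae⟩
    obtain ⟨σ, rfl⟩ := (hfactor τ).1 hτ
    exact ⟨σ, hnae⟩
  · rintro ⟨σ, hσ⟩
    exact ⟨fun s => σ (Φ s.1 s.2), (hfactor _).2 ⟨σ, rfl⟩, hσ⟩
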